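/- Let n ≥ 2 and let μ = f·Lⁿ ∈ 𝒲(ℝⁿ) be a PS measure. Then for every v ∈ S^{n−1} and every Lebesgue-measurable set E ⊆ ℝⁿ, Per_μ(H_μ(E, v)) ≤ Per_μ(E), where H_μ(E, v) is the largest half-space in direction v with the same μ-measure as E. -/

import Mathlib

/-!
Let `H` be the half-space in direction `v` with the mass of `E`, and consider the sets `F` with the
mass of `E` and no more perimeter. Symmetrizing `F` in a direction `w` with `⟪w, v⟫ > 0` keeps it in
this class and moves into `H`, on each line parallel to `w`, the smaller of the masses of `F \ H`
and `H \ F`. Along a sequence minimizing the mass of `F \ H` the total mass moved therefore tends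
to zero, uniformly in `w`. A line from a point of `F \ H` to a point of `H \ F` always has such a
direction, so averaging over all directions shows that the product of the masses of `F \ H` and
`H \ F` tends to zero. These masses are equal, so the minimizing sequence converges to `H`. The
perimeter is lower semicontinuous along it, because the weak gradient of `f ≥ 0` vanishes almost
everywhere on `{f = 0}`, so that `f ∇·φ + φ·∇f` is the density of a measure absolutely continuous
with respect to `μ`.
-/

open MeasureTheory Set Filter
open scoped ENNReal RealInnerProductSpace Topology

noncomputable section

/-- Euclidean space ℝⁿ. -/
abbrev En (n : ℕ) := EuclideanSpace ℝ (Fin n)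

/-- Divergence of a vector field on ℝⁿ. -/
noncomputable def dvg {n : ℕ} (φ : En n → En n) (x : En n) : ℝ :=
  ∑ i : Fin n, fderiv ℝ φ x (EuclideanSpace.single i 1) i

/-- `f'` is the (weak) gradient of `f`, and both are locally integrable;
this encodes `f ∈ W^{1,1}_loc(ℝⁿ)` with weak gradient `∇f = f'`. -/
def HasWeakGrad {n : ℕ} (f : En n → ℝ) (f' : En n → En n) : Prop :=
  LocallyIntegrable f volume ∧ LocallyIntegrable f' volume ∧
    ∀ φ : En n → En n, ContDiff ℝ 1 φ → HasCompactSupport φ →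
      (∫ x, f x * dvg φ x) = - ∫ x, ⟪φ x, f' x⟫

/-- Membership of `μ = f·Lⁿ` in the class `𝒲(ℝⁿ)`: the density `f` is non-negative,
integrable and lies in `W^{1,1}_loc(ℝⁿ)` with weak gradient `f'`. -/
def MemW {n : ℕ} (f : En n → ℝ) (f' : En n → En n) : Prop :=
  (∀ x, 0 ≤ f x) ∧ Integrable f volume ∧ HasWeakGrad f f'

/-- Admissible test vector fields: `C¹`, compactly supported in `U`, sup-norm at most 1. -/
def IsTestField {n : ℕ} (U : Set (En n)) (φ : En n → En n) : Prop :=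
  ContDiff ℝ 1 φ ∧ HasCompactSupport φ ∧ tsupport φ ⊆ U ∧ ∀ x, ‖φ x‖ ≤ 1

/-- The weighted variation `‖g‖_{BV_μ(U)}` (valued in `ℝ≥0∞`;
membership in `BV_μ(U)` means that this quantity is finite). -/
noncomputable def bvVar {n : ℕ} (f : En n → ℝ) (f' : En n → En n) (U : Set (En n))
    (g : En n → ℝ) : ℝ≥0∞ :=
  ⨆ (φ : En n → En n) (_ : IsTestField U φ),
    ENNReal.ofReal (∫ x in U, g x * (f x * dvg φ x + ⟪φ x, f' x⟫))

/-- The weighted perimeter `Per_μ(E; U)`. -/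
noncomputable def perim {n : ℕ} (f : En n → ℝ) (f' : En n → En n) (U : Set (En n))
    (E : Set (En n)) : ℝ≥0∞ :=
  bvVar f f' U (E.indicator fun _ => (1 : ℝ))

/-- The measure `μ = f·Lⁿ`. -/
noncomputable def muM {n : ℕ} (f : En n → ℝ) : Measure (En n) :=
  volume.withDensity fun x => ENNReal.ofReal (f x)

/-- One-dimensional generalized Ehrhard symmetrization of `A ⊆ ℝ` in direction `v ∈ {−1,+1}`
with respect to a measure `ν` on `ℝ`: the largest half-line `{t : v·t ≥ c}` of `ν`-measure
`ν A` (with the conventions `∅`, `ℝ` when `c = ±∞`). -/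
def ehrhard1D (ν : Measure ℝ) (v : ℝ) (A : Set ℝ) : Set ℝ :=
  {t | ∀ b : ℝ, (∀ c : ℝ, ν {y | c ≤ v * y} ≤ ν A → b ≤ c) → b ≤ v * t}

/-- The weighted measure `f·H¹` on the fiber `{x + t·v : t ∈ ℝ}`, identified with `ℝ`. -/
noncomputable def fiberMeasure {n : ℕ} (f : En n → ℝ) (x v : En n) : Measure ℝ :=
  (volume : Measure ℝ).withDensity fun t => ENNReal.ofReal (f (x + t • v))

/-- Generalized `v`-Ehrhard symmetrization of `E ⊆ ℝⁿ` with respect to `μ = f·Lⁿ`: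
on each fiber over `v^⊥` one replaces `E` by the largest half-line in direction `v`
of the same weighted measure. -/
def ehrhardSymm {n : ℕ} (f : En n → ℝ) (v : En n) (E : Set (En n)) : Set (En n) :=
  {z | ⟪z, v⟫ ∈
      ehrhard1D (fiberMeasure f (z - ⟪z, v⟫ • v) v) 1
        {t | (z - ⟪z, v⟫ • v) + t • v ∈ E}}

/-- `μ = f·Lⁿ` is a perimeter symmetrization (PS) measure: generalized Ehrhard
symmetrization does not increase the weighted perimeter of sets of finite `μ`-perimeter. -/
def IsPSMeasure {n : ℕ} (f : En n → ℝ) (f' : En n → En n) : Prop :=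
  ∀ v : En n, ‖v‖ = 1 → ∀ E : Set (En n), NullMeasurableSet E volume →
    perim f f' univ E < ⊤ →
      perim f f' univ (ehrhardSymm f v E) ≤ perim f f' univ E

/-- The half-space `H(v, r) = {x : x·v ≥ r}`. -/
def halfSpace {n : ℕ} (v : En n) (r : ℝ) : Set (En n) := {x | r ≤ ⟪x, v⟫}

/-- `H_μ(E, v)`: the largest half-space in direction `v` with `μ`-measure `μ(E)`. -/
def halfSpaceOf {n : ℕ} (f : En n → ℝ) (E : Set (En n)) (v : En n) : Set (En n) :=
  {x | ∀ b : ℝ, (∀ c : ℝ, muM f (halfSpace v c) ≤ muM f E → b ≤ c) → b ≤ ⟪x, v⟫}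

/-- `g'` is the weak derivative of `g : ℝ → ℝ` (so `g ∈ W^{1,1}_loc(ℝ)`). -/
def HasWeakDeriv (g g' : ℝ → ℝ) : Prop :=
  LocallyIntegrable g volume ∧ LocallyIntegrable g' volume ∧
    ∀ φ : ℝ → ℝ, ContDiff ℝ 1 φ → HasCompactSupport φ →
      (∫ t, g t * deriv φ t) = - ∫ t, φ t * g' t

/-! ### Finite measures -/

section FiniteMeasure

variable {α : Type*} [MeasurableSpace α] {μ : Measure α} [IsFiniteMeasure μ]

lemma tendsto_measure_zero_of_absolutelyContinuous {ν : Measure α} (hμν : μ ≪ ν) {S : ℕ → Set α}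
    (hS : ∀ k, MeasurableSet (S k)) (hνS : Tendsto (fun k => ν (S k)) atTop (𝓝 0)) :
    Tendsto (fun k => μ (S k)) atTop (𝓝 0) := by
  refine tendsto_of_subseq_tendsto fun ns hns => ?_
  obtain ⟨ε, hε, hεsum⟩ := ENNReal.exists_pos_sum_of_countable' one_ne_zero ℕ
  obtain ⟨ms, -, hms⟩ := extraction_forall_of_eventually fun k =>
    (hνS.comp hns).eventually_le_const (hε k)
  have hsum : ∑' k, ν (S (ns (ms k))) ≠ ⊤ :=
    ((ENNReal.tsum_le_tsum hms).trans_lt (hεsum.trans ENNReal.one_lt_top)).ne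
  refine ⟨ms, ?_⟩
  rw [← measure_empty (μ := μ)]
  refine tendsto_measure_of_ae_tendsto_indicator_of_isFiniteMeasure atTop .empty (fun k => hS _) ?_
  filter_upwards [hμν.ae_le (ae_eventually_notMem hsum)] with x hx
  filter_upwards [hx] with k hk
  simp [hk]

lemma measure_sdiff_comm {A B : Set α} (hA : MeasurableSet A) (hB : MeasurableSet B)
    (h : μ A = μ B) : μ (A \ B) = μ (B \ A) := by
  rw [← ENNReal.add_left_inj (measure_ne_top μ (A ∩ B)), measure_sdiff_add_inter _ hB, h,
    inter_comm, measure_sdiff_add_inter _ hA]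

lemma measure_sdiff_add_min_le {A T H : Set α} (hA : MeasurableSet A) (hH : MeasurableSet H)
    (h : μ T = μ A) (hTH : T ⊆ H ∨ H ⊆ T) :
    μ (T \ H) + min (μ (A \ H)) (μ (H \ A)) ≤ μ (A \ H) := by
  rcases hTH with hTH | hHT
  · simp [sdiff_eq_empty.mpr hTH]
  · have hmass : μ H + (μ (T \ H) + μ (H \ A)) = μ H + μ (A \ H) := by
      calc μ H + (μ (T \ H) + μ (H \ A))
          = μ (A \ H) + μ (A ∩ H) + μ (H \ A) := by
            rw [← add_assoc, measure_add_sdiff hH.nullMeasurableSet,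
              union_eq_self_of_subset_left hHT, h, measure_sdiff_add_inter _ hH]
        _ = μ (H \ A) + μ (H ∩ A) + μ (A \ H) := by rw [inter_comm]; ring
        _ = μ H + μ (A \ H) := by rw [measure_sdiff_add_inter _ hA]
    rw [ENNReal.add_right_inj (measure_ne_top μ H)] at hmass
    exact (add_le_add_right (min_le_right _ _) _).trans hmass.le

end FiniteMeasure

section RealLine

variable {ν : Measure ℝ}

lemma exists_lt_measure_Ici [IsFiniteMeasure ν] {m : ℝ≥0∞} {s : Set ℝ} (hs : MeasurableSet s)
    (h : m < ν s) : ∃ b ∈ s, m < ν (Ici b) := by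
  obtain ⟨K, hKs, hK, hmK⟩ := hs.exists_lt_isCompact h
  have hne : K.Nonempty := nonempty_of_measure_ne_zero (ne_bot_of_gt hmK)
  obtain ⟨b, hb⟩ := hK.exists_isLeast hne
  exact ⟨b, hKs hb.1, hmK.trans_le (measure_mono fun x hx => hb.2 hx)⟩

lemma setOf_forall_le_eq_setOf_measure_Ici_le [IsFiniteMeasure ν] [NullSingletonClass ν]
    (m : ℝ≥0∞) :
    {t | ∀ b, (∀ c, ν (Ici c) ≤ m → b ≤ c) → b ≤ t} = {t | ν (Ici t) ≤ m} := by
  ext t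
  refine ⟨fun ht => ?_, fun ht b hb => hb t ht⟩
  by_contra hlt
  rw [mem_ofPred_eq, not_le, measure_congr Ioi_ae_eq_Ici.symm] at hlt
  obtain ⟨b, htb, hb⟩ := exists_lt_measure_Ici measurableSet_Ioi hlt
  refine (ht b fun c hc => ?_).not_gt htb
  by_contra hcb
  exact (hb.trans_le (measure_mono (Ici_subset_Ici.mpr (not_le.mp hcb).le))).not_ge hc

lemma isUpperSet_setOf_measure_Ici_le (m : ℝ≥0∞) : IsUpperSet {t | ν (Ici t) ≤ m} :=
  fun _ _ hst hs => (measure_mono (Ici_subset_Ici.mpr hst)).trans hs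

lemma measure_setOf_measure_Ici_le [IsFiniteMeasure ν] [NullSingletonClass ν] {m : ℝ≥0∞}
    (hm : m ≤ ν univ) : ν {t | ν (Ici t) ≤ m} = m := by
  set T := {t | ν (Ici t) ≤ m}
  have hT : MeasurableSet T := (isUpperSet_setOf_measure_Ici_le m).ordConnected.measurableSet
  refine le_antisymm (not_lt.mp fun hlt => ?_) (not_lt.mp fun hlt => ?_)
  · obtain ⟨b, hbT, hb⟩ := exists_lt_measure_Ici hT hlt
    exact hb.not_ge hbT
  · have hcompl : ν univ - m < ν Tᶜ := by
      refine ENNReal.sub_lt_of_lt_add hm ?_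
      rw [← measure_add_measure_compl hT, add_comm]
      exact ENNReal.add_lt_add_left (measure_ne_top ν _) hlt
    obtain ⟨K, hKT, hK, hmK⟩ := hT.compl.exists_lt_isCompact hcompl
    have hne : K.Nonempty := nonempty_of_measure_ne_zero (ne_bot_of_gt hmK)
    obtain ⟨b, hb⟩ := hK.exists_isGreatest hne
    have hlarge : ν univ < ν (Iic b) + ν (Ici b) := calc
      ν univ ≤ ν univ - m + m := le_tsub_add
      _ < ν (Iic b) + ν (Ici b) := ENNReal.add_lt_add
        (hmK.trans_le (measure_mono fun x hx => hb.2 hx)) (not_le.mp (hKT hb.1))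
    refine hlarge.ne ?_
    rw [measure_congr Iio_ae_eq_Iic.symm, ← compl_Ici, add_comm,
      measure_add_measure_compl measurableSet_Ici]

end RealLine

/-! ### Lines in a fixed direction -/

section Lines

variable {E : Type*} [NormedAddCommGroup E] [InnerProductSpace ℝ E] {w : E}

lemma inner_add_smul_of_mem_orthogonal (hw : ‖w‖ = 1) (p : (ℝ ∙ w)ᗮ) (t : ℝ) :
    ⟪(p : E) + t • w, w⟫ = t := by
  rw [inner_add_left, real_inner_comm, Submodule.mem_orthogonal_singleton_iff_inner_right.mp p.2,
    real_inner_smul_left, real_inner_self_eq_norm_sq, hw]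
  ring

variable [FiniteDimensional ℝ E] [MeasurableSpace E] [BorelSpace E]

/-- The coordinates `(p, t) ↦ p + t • w` adapted to the lines in the unit direction `w`: the
foot `p` of the line in the hyperplane `w^⊥`, and the position `t` along the line. -/
def lineCoordinates (hw : ‖w‖ = 1) : (ℝ ∙ w)ᗮ × ℝ ≃ᵐ E :=
  MeasurableEquiv.prodComm.trans <|
    (MeasurableEquiv.prodCongr
      (LinearIsometryEquiv.toSpanUnitSingleton w hw).toMeasurableEquiv (.refl _)).trans <|
    (MeasurableEquiv.toLp 2 _).trans (ℝ ∙ w).orthogonalDecomposition.symm.toMeasurableEquiv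

@[simp] lemma lineCoordinates_apply (hw : ‖w‖ = 1) (q : (ℝ ∙ w)ᗮ × ℝ) :
    lineCoordinates hw q = q.1 + q.2 • w := by
  change q.2 • w + (q.1 : E) = q.1 + q.2 • w
  exact add_comm _ _

lemma measurePreserving_lineCoordinates (hw : ‖w‖ = 1) :
    MeasurePreserving (lineCoordinates hw) := by
  refine Measure.measurePreserving_swap.trans (MeasurePreserving.trans ?_ <|
    (WithLp.volume_preserving_toLp _ _).trans (LinearIsometryEquiv.measurePreserving _))
  exact (LinearIsometryEquiv.toSpanUnitSingleton w hw).measurePreserving.prod (.id _)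

lemma lintegral_eq_lintegral_lines (hw : ‖w‖ = 1) {g : E → ℝ≥0∞} (hg : Measurable g) :
    ∫⁻ x, g x = ∫⁻ p : (ℝ ∙ w)ᗮ, ∫⁻ t : ℝ, g (p + t • w) := by
  rw [← (measurePreserving_lineCoordinates hw).lintegral_comp hg,
    Measure.volume_eq_prod, lintegral_prod _ (by fun_prop)]
  simp

lemma ae_lines_of_ae (hw : ‖w‖ = 1) {P : E → Prop} (h : ∀ᵐ x, P x) :
    ∀ᵐ p : (ℝ ∙ w)ᗮ, ∀ᵐ t : ℝ, P (p + t • w) := by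
  refine Measure.ae_ae_of_ae_prod (p := fun q : (ℝ ∙ w)ᗮ × ℝ => P (q.1 + q.2 • w)) ?_
  simpa [← Measure.volume_eq_prod] using
    (measurePreserving_lineCoordinates hw).quasiMeasurePreserving.ae h

lemma ae_of_ae_forall_line (hw : ‖w‖ = 1) {P : E → Prop}
    (h : ∀ᵐ p : (ℝ ∙ w)ᗮ, ∀ t : ℝ, P (p + t • w)) : ∀ᵐ x, P x := by
  have hprod : ∀ᵐ q : (ℝ ∙ w)ᗮ × ℝ, P (lineCoordinates hw q) := by
    filter_upwards [Measure.quasiMeasurePreserving_fst.ae h] with q hq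
    simpa using hq q.2
  filter_upwards [(measurePreserving_lineCoordinates hw).symm.quasiMeasurePreserving.ae hprod]
    with x hx
  simpa only [MeasurableEquiv.apply_symm_apply] using hx

end Lines

section LineMeasure

variable {E : Type*} [NormedAddCommGroup E] [InnerProductSpace ℝ E]

/-- The measure `g·H¹` on the line through `x` in direction `w`, parametrised by `x + t • w`. -/
def lineMeasure (g : E → ℝ≥0∞) (x w : E) : Measure ℝ :=
  volume.withDensity fun t => g (x + t • w)

/-- The intersection of `F` with the line through `x` in direction `w`, as a subset of `ℝ`. -/
abbrev lineSection (F : Set E) (x w : E) : Set ℝ := (fun t : ℝ => x + t • w) ⁻¹' F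

variable {g : E → ℝ≥0∞} {w : E}

instance (x : E) : NullSingletonClass (lineMeasure g x w) := by
  unfold lineMeasure; infer_instance

lemma lineMeasure_univ (x : E) : lineMeasure g x w univ = ∫⁻ t : ℝ, g (x + t • w) := by
  simp [lineMeasure]

variable [MeasurableSpace E] [BorelSpace E]

lemma measurableSet_lineSection {F : Set E} (hF : MeasurableSet F) (x w : E) :
    MeasurableSet (lineSection F x w) :=
  hF.preimage (by fun_prop)

lemma lineMeasure_lineSection {F : Set E} (hF : MeasurableSet F) (x : E) :
    lineMeasure g x w (lineSection F x w) = ∫⁻ t : ℝ, F.indicator g (x + t • w) := by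
  rw [lineMeasure, withDensity_apply _ (measurableSet_lineSection hF _ _),
    ← lintegral_indicator (measurableSet_lineSection hF _ _)]
  rfl

lemma lineMeasure_lineSection_add_smul {F : Set E} (hF : MeasurableSet F) (x : E) (t : ℝ) :
    lineMeasure g (x + t • w) w (lineSection F (x + t • w) w) =
      lineMeasure g x w (lineSection F x w) := by
  simp only [lineMeasure_lineSection hF, add_assoc, ← add_smul]
  exact lintegral_add_left_eq_self (fun s => F.indicator g (x + s • w)) t

variable [FiniteDimensional ℝ E]

lemma measurable_lineMeasure (hg : Measurable g) {α : Type*} [MeasurableSpace α] {S : Set (α × ℝ)}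
    (hS : MeasurableSet S) {φ ψ : α → E} (hφ : Measurable φ) (hψ : Measurable ψ) :
    Measurable fun a => lineMeasure g (φ a) (ψ a) (Prod.mk a ⁻¹' S) := by
  have hsection (a : α) : lineMeasure g (φ a) (ψ a) (Prod.mk a ⁻¹' S)
      = ∫⁻ t, S.indicator (fun q => g (φ q.1 + q.2 • ψ q.1)) (a, t) := by
    rw [lineMeasure, withDensity_apply _ (measurable_prodMk_left hS),
      ← lintegral_indicator (measurable_prodMk_left hS)]
    rfl
  simp_rw [hsection]
  exact Measurable.lintegral_prod_right' (Measurable.indicator (by fun_prop) hS)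

lemma withDensity_eq_lintegral_lineMeasure (hw : ‖w‖ = 1)
    (hg : Measurable g) {B : Set E} (hB : MeasurableSet B) :
    volume.withDensity g B = ∫⁻ p : (ℝ ∙ w)ᗮ, lineMeasure g p w (lineSection B p w) := by
  rw [withDensity_apply _ hB, ← lintegral_indicator hB,
    lintegral_eq_lintegral_lines hw (hg.indicator hB)]
  simp only [lineMeasure_lineSection hB]

lemma ae_isFiniteMeasure_lineMeasure (hw : ‖w‖ = 1)
    (hg : Measurable g) (hgfin : ∫⁻ x, g x ≠ ⊤) :
    ∀ᵐ p : (ℝ ∙ w)ᗮ, IsFiniteMeasure (lineMeasure g p w) := by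
  rw [lintegral_eq_lintegral_lines hw hg] at hgfin
  filter_upwards [ae_lt_top (by fun_prop) hgfin] with p hp
  exact ⟨by rwa [lineMeasure_univ]⟩

end LineMeasure

/-! ### Symmetrization along lines -/

section LineSymm

variable {E : Type*} [NormedAddCommGroup E] [InnerProductSpace ℝ E] {g : E → ℝ≥0∞} {w : E}

/-- Ehrhard symmetrization in the unit direction `w` with respect to the measure with density `g`.
In contrast to `ehrhardSymm`, membership is a comparison of two line masses, so that measurability
is evident; the two agree almost everywhere by `ehrhardSymm_ae_eq_lineSymm`. -/
def lineSymm (g : E → ℝ≥0∞) (w : E) (F : Set E) : Set E :=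
  {x | lineMeasure g (x - ⟪x, w⟫ • w) w (Ici ⟪x, w⟫) ≤
    lineMeasure g (x - ⟪x, w⟫ • w) w (lineSection F (x - ⟪x, w⟫ • w) w)}

lemma lineSection_lineSymm (hw : ‖w‖ = 1) (F : Set E) (p : (ℝ ∙ w)ᗮ) :
    lineSection (lineSymm g w F) p w =
      {t | lineMeasure g p w (Ici t) ≤ lineMeasure g p w (lineSection F p w)} := by
  ext t
  simp only [lineSymm, mem_preimage, mem_ofPred_eq, inner_add_smul_of_mem_orthogonal hw,
    add_sub_cancel_right]

lemma lineMeasure_lineSection_lineSymm (hw : ‖w‖ = 1) (F : Set E) (p : (ℝ ∙ w)ᗮ)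
    [IsFiniteMeasure (lineMeasure g p w)] :
    lineMeasure g p w (lineSection (lineSymm g w F) p w) =
      lineMeasure g p w (lineSection F p w) := by
  rw [lineSection_lineSymm hw, measure_setOf_measure_Ici_le (measure_mono (subset_univ _))]

variable [FiniteDimensional ℝ E] [MeasurableSpace E] [BorelSpace E]

lemma measurableSet_lineSymm (hg : Measurable g) {F : Set E} (hF : MeasurableSet F) :
    MeasurableSet (lineSymm g w F) := by
  have hfoot : Measurable fun x : E => x - ⟪x, w⟫ • w := by fun_prop
  refine measurableSet_le
    (measurable_lineMeasure hg (S := {q : E × ℝ | ⟪q.1, w⟫ ≤ q.2}) ?_ hfoot measurable_const)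
    (measurable_lineMeasure hg (S := {q : E × ℝ | q.1 - ⟪q.1, w⟫ • w + q.2 • w ∈ F}) ?_ hfoot
      measurable_const)
  · exact measurableSet_le (by fun_prop) (by fun_prop)
  · exact hF.preimage (by fun_prop)

lemma withDensity_lineSymm (hw : ‖w‖ = 1) (hg : Measurable g) (hgfin : ∫⁻ x, g x ≠ ⊤)
    {F : Set E} (hF : MeasurableSet F) :
    volume.withDensity g (lineSymm g w F) = volume.withDensity g F := by
  rw [withDensity_eq_lintegral_lineMeasure hw hg (measurableSet_lineSymm hg hF),
    withDensity_eq_lintegral_lineMeasure hw hg hF]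
  refine lintegral_congr_ae ?_
  filter_upwards [ae_isFiniteMeasure_lineMeasure hw hg hgfin] with p hp
  exact lineMeasure_lineSection_lineSymm hw F p

/-- The mass which can be moved from `A` to `B` along lines in direction `w`. -/
def lineTransfer (g : E → ℝ≥0∞) (w : E) (A B : Set E) : ℝ≥0∞ :=
  ∫⁻ p : (ℝ ∙ w)ᗮ,
    min (lineMeasure g p w (lineSection A p w)) (lineMeasure g p w (lineSection B p w))

lemma measurable_lineMeasure_lineSection (hg : Measurable g) {A : Set E} (hA : MeasurableSet A) :
    Measurable fun p : (ℝ ∙ w)ᗮ => lineMeasure g p w (lineSection A p w) :=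
  measurable_lineMeasure hg (S := {q : (ℝ ∙ w)ᗮ × ℝ | (q.1 : E) + q.2 • w ∈ A})
    (hA.preimage (by fun_prop)) measurable_subtype_coe measurable_const

lemma withDensity_lineSymm_sdiff_add_lineTransfer_le (hw : ‖w‖ = 1) (hg : Measurable g)
    (hgfin : ∫⁻ x, g x ≠ ⊤) {F H : Set E} (hF : MeasurableSet F) (hH : MeasurableSet H)
    (hHw : ∀ x, IsUpperSet (lineSection H x w)) :
    volume.withDensity g (lineSymm g w F \ H) + lineTransfer g w (F \ H) (H \ F) ≤
      volume.withDensity g (F \ H) := by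
  have hT : MeasurableSet (lineSymm g w F) := measurableSet_lineSymm hg hF
  rw [withDensity_eq_lintegral_lineMeasure hw hg (hT.diff hH),
    withDensity_eq_lintegral_lineMeasure hw hg (hF.diff hH), lineTransfer,
    ← lintegral_add_left (measurable_lineMeasure_lineSection hg (hT.diff hH))]
  refine lintegral_mono_ae ?_
  filter_upwards [ae_isFiniteMeasure_lineMeasure hw hg hgfin] with p hp
  have hnested : lineSection (lineSymm g w F) p w ⊆ lineSection H p w ∨
      lineSection H p w ⊆ lineSection (lineSymm g w F) p w := by
    rw [lineSection_lineSymm hw]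
    exact (isUpperSet_setOf_measure_Ici_le _).total (hHw p)
  exact measure_sdiff_add_min_le (measurableSet_lineSection hF p w)
    (measurableSet_lineSection hH p w) (lineMeasure_lineSection_lineSymm hw F p) hnested

end LineSymm

lemma ehrhard1D_one (ν : Measure ℝ) [IsFiniteMeasure ν] [NullSingletonClass ν] (A : Set ℝ) :
    ehrhard1D ν 1 A = {t | ν (Ici t) ≤ ν A} := by
  rw [← setOf_forall_le_eq_setOf_measure_Ici_le]
  simp [ehrhard1D, Ici]

lemma ehrhardSymm_ae_eq_lineSymm {n : ℕ} {f : En n → ℝ} {g : En n → ℝ≥0∞} {w : En n}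
    (hw : ‖w‖ = 1) (hg : Measurable g) (hgfin : ∫⁻ x, g x ≠ ⊤)
    (hfg : (fun x => ENNReal.ofReal (f x)) =ᵐ[volume] g) (F : Set (En n)) :
    ehrhardSymm f w F =ᵐ[volume] lineSymm g w F := by
  refine eventuallyEq_set.mpr (ae_of_ae_forall_line hw ?_)
  filter_upwards [ae_isFiniteMeasure_lineMeasure hw hg hgfin, ae_lines_of_ae hw hfg]
    with p hp hfgp t
  have hline : fiberMeasure f p w = lineMeasure g p w := withDensity_congr_ae hfgp
  simp only [ehrhardSymm, lineSymm, mem_ofPred_eq, inner_add_smul_of_mem_orthogonal hw,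
    add_sub_cancel_right, hline, ehrhard1D_one]
  rfl

/-! ### Pairs of points and the lines joining them -/

lemma lintegral_eq_lintegral_sphere_Ioi {E : Type*} [NormedAddCommGroup E] [NormedSpace ℝ E]
    [Nontrivial E] [FiniteDimensional ℝ E] [MeasurableSpace E] [BorelSpace E] (μ : Measure E)
    [μ.IsAddHaarMeasure] {h : E → ℝ≥0∞} (hh : Measurable h) :
    ∫⁻ z, h z ∂μ = ∫⁻ w : Metric.sphere (0 : E) 1, ∫⁻ r in Ioi (0 : ℝ),
      ENNReal.ofReal (r ^ (Module.finrank ℝ E - 1)) * h (r • (w : E)) ∂volume ∂μ.toSphere := by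
  have hpolar := μ.measurePreserving_homeomorphUnitSphereProd.symm
    (homeomorphUnitSphereProd E).toMeasurableEquiv
  calc ∫⁻ z, h z ∂μ = ∫⁻ z : ({0}ᶜ : Set E), h z ∂μ.comap (↑) := by
        rw [lintegral_subtype_comap (measurableSet_singleton _).compl,
          restrict_compl_singleton]
    _ = ∫⁻ q : Metric.sphere (0 : E) 1 × Ioi (0 : ℝ), h ((q.2 : ℝ) • (q.1 : E))
          ∂μ.toSphere.prod (.volumeIoiPow (Module.finrank ℝ E - 1)) :=
        (hpolar.lintegral_comp (hh.comp measurable_subtype_coe)).symm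
    _ = ∫⁻ w : Metric.sphere (0 : E) 1, ∫⁻ r : Ioi (0 : ℝ), h ((r : ℝ) • (w : E))
          ∂.volumeIoiPow (Module.finrank ℝ E - 1) ∂μ.toSphere :=
        lintegral_prod _ (by fun_prop)
    _ = _ := by
        refine lintegral_congr fun w => ?_
        rw [Measure.volumeIoiPow, lintegral_withDensity_eq_lintegral_mul _ (by fun_prop)
          (by fun_prop)]
        exact lintegral_subtype_comap measurableSet_Ioi
          fun r : ℝ => ENNReal.ofReal (r ^ (Module.finrank ℝ E - 1)) * h (r • (w : E))

section Pairs

variable {E : Type*} [NormedAddCommGroup E] [InnerProductSpace ℝ E] {g : E → ℝ≥0∞} {w : E}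

/-- The density, with respect to pairs of points distributed by the mass `g`, of the measure on
pairs obtained by choosing a direction and a line uniformly and then two points on this line
independently: `1 / (|x - y|^(dim E - 1) · m)`, where `m` is the mass of the line through `x` and
`y`. -/
def pairDensity (g : E → ℝ≥0∞) (q : E × E) : ℝ≥0∞ :=
  (ENNReal.ofReal (‖q.2 - q.1‖ ^ (Module.finrank ℝ E - 1)) *
    lineMeasure g q.1 (‖q.2 - q.1‖⁻¹ • (q.2 - q.1)) univ)⁻¹

lemma ofReal_pow_mul_pairDensity_add_smul (hw : ‖w‖ = 1) (x : E) {r : ℝ} (hr : 0 < r) :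
    ENNReal.ofReal (r ^ (Module.finrank ℝ E - 1)) * pairDensity g (x, x + r • w) =
      (lineMeasure g x w univ)⁻¹ := by
  have hpow : ENNReal.ofReal (r ^ (Module.finrank ℝ E - 1)) ≠ 0 := by positivity
  have hpair : pairDensity g (x, x + r • w) =
      (ENNReal.ofReal (r ^ (Module.finrank ℝ E - 1)) * lineMeasure g x w univ)⁻¹ := by
    simp [pairDensity, norm_smul, hw, abs_of_pos hr, smul_smul, inv_mul_cancel₀ hr.ne']
  rw [hpair, ENNReal.mul_inv (.inl hpow) (.inl ENNReal.ofReal_ne_top),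
    ENNReal.mul_inv_cancel_left hpow ENNReal.ofReal_ne_top]

variable [MeasurableSpace E] [BorelSpace E] [FiniteDimensional ℝ E]

lemma measurable_pairDensity (hg : Measurable g) : Measurable (pairDensity g) :=
  ((by fun_prop : Measurable fun q : E × E =>
      ENNReal.ofReal (‖q.2 - q.1‖ ^ (Module.finrank ℝ E - 1))).mul
    (measurable_lineMeasure hg .univ measurable_fst (by fun_prop))).inv

lemma pairDensity_ne_zero_ae [Nontrivial E] (hg : Measurable g) (hgfin : ∫⁻ x, g x ≠ ⊤) :
    ∀ᵐ q : E × E, pairDensity g q ≠ 0 := by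
  have hfin : ∀ᵐ q : E × E, lineMeasure g q.2 (‖q.1‖⁻¹ • q.1) univ ≠ ⊤ := by
    have hmeas : Measurable fun q : E × E => lineMeasure g q.2 (‖q.1‖⁻¹ • q.1) univ :=
      measurable_lineMeasure hg .univ measurable_snd (by fun_prop)
    refine (Measure.ae_prod_iff_ae_ae (measurableSet_eq_fun hmeas measurable_const).compl).mpr ?_
    filter_upwards [compl_mem_ae_iff.mpr (measure_singleton (0 : E))] with z hz
    have hw : ‖‖z‖⁻¹ • z‖ = 1 := norm_smul_inv_norm hz
    refine ae_of_ae_forall_line hw ?_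
    filter_upwards [ae_isFiniteMeasure_lineMeasure hw hg hgfin] with p hp t
    have hinvariant := lineMeasure_lineSection_add_smul (g := g) (w := ‖z‖⁻¹ • z) .univ (p : E) t
    simp only [preimage_univ] at hinvariant
    rw [hinvariant]
    exact measure_ne_top _ _
  have hsub := (Measure.measurePreserving_swap.comp
    (measurePreserving_prod_neg_add (volume : Measure E) volume)).quasiMeasurePreserving.ae hfin
  filter_upwards [hsub] with q hq
  refine ENNReal.inv_ne_zero.mpr (ENNReal.mul_ne_top ENNReal.ofReal_ne_top ?_)
  simpa [neg_add_eq_sub] using hq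

lemma setLIntegral_pairDensity [Nontrivial E] (hg : Measurable g) {B : Set E}
    (hB : MeasurableSet B) (x : E) :
    ∫⁻ y in B, pairDensity g (x, y) ∂volume.withDensity g =
      ∫⁻ w : Metric.sphere (0 : E) 1, (lineMeasure g x w univ)⁻¹ *
        lineMeasure g x w (Ioi 0 ∩ lineSection B x w) ∂volume.toSphere := by
  have hmeas : Measurable fun y => pairDensity g (x, y) :=
    (measurable_pairDensity hg).comp measurable_prodMk_left
  have hgB : Measurable fun z => B.indicator (g * fun y => pairDensity g (x, y)) (x + z) :=
    ((hg.mul hmeas).indicator hB).comp (measurable_const_add x)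
  rw [setLIntegral_withDensity_eq_setLIntegral_mul _ hg hmeas hB, ← lintegral_indicator hB,
    ← lintegral_add_left_eq_self _ x,
    lintegral_eq_lintegral_sphere_Ioi volume hgB]
  refine lintegral_congr fun w => ?_
  have hw : ‖(w : E)‖ = 1 := norm_eq_of_mem_sphere w
  have hS : MeasurableSet (lineSection B x w) := measurableSet_lineSection hB x w
  calc ∫⁻ r in Ioi (0 : ℝ), ENNReal.ofReal (r ^ (Module.finrank ℝ E - 1)) *
        B.indicator (g * fun y => pairDensity g (x, y)) (x + r • (w : E))
      = ∫⁻ r in Ioi (0 : ℝ), (lineMeasure g x w univ)⁻¹ *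
          (lineSection B x w).indicator (fun r => g (x + r • (w : E))) r := by
        refine setLIntegral_congr_fun measurableSet_Ioi fun r (hr : 0 < r) => ?_
        rw [← ofReal_pow_mul_pairDensity_add_smul hw x hr, mul_assoc]
        congr 1
        by_cases hrB : x + r • (w : E) ∈ B
        · simp [indicator, hrB, mul_comm]
        · simp [indicator, hrB]
    _ = _ := by
        have hgline : Measurable fun r : ℝ => g (x + r • (w : E)) := by fun_prop
        rw [lintegral_const_mul _ (hgline.indicator hS), setLIntegral_indicator hS,
          inter_comm (Ioi 0), lineMeasure, withDensity_apply _ (hS.inter measurableSet_Ioi)]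

lemma setLIntegral_inv_mul_lineMeasure_le_lineTransfer (hw : ‖w‖ = 1) (hg : Measurable g)
    {A B : Set E} (hA : MeasurableSet A) (hB : MeasurableSet B) :
    ∫⁻ x in A, (lineMeasure g x w univ)⁻¹ * lineMeasure g x w (lineSection B x w)
      ∂volume.withDensity g ≤ lineTransfer g w A B := by
  have hmeas : Measurable fun x =>
      (lineMeasure g x w univ)⁻¹ * lineMeasure g x w (lineSection B x w) :=
    (measurable_lineMeasure hg .univ measurable_id measurable_const).inv.mul
      (measurable_lineMeasure hg (S := {q : E × ℝ | q.1 + q.2 • w ∈ B}) (hB.preimage (by fun_prop))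
        measurable_id measurable_const)
  rw [setLIntegral_withDensity_eq_setLIntegral_mul _ hg hmeas hA, ← lintegral_indicator hA,
    lintegral_eq_lintegral_lines hw ((hg.mul hmeas).indicator hA)]
  refine lintegral_mono fun p => ?_
  set m := lineMeasure g p w
  have hinvariant {S : Set E} (hS : MeasurableSet S) (t : ℝ) :
      lineMeasure g (p + t • w) w (lineSection S (p + t • w) w) = m (lineSection S p w) :=
    lineMeasure_lineSection_add_smul hS p t
  have huniv (t : ℝ) : lineMeasure g (p + t • w) w univ = m univ := hinvariant .univ t
  have hline : ∫⁻ t : ℝ, A.indicator (g * fun x => (lineMeasure g x w univ)⁻¹ *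
      lineMeasure g x w (lineSection B x w)) (p + t • w) =
      m (lineSection A p w) * ((m univ)⁻¹ * m (lineSection B p w)) := by
    have hgA : Measurable fun t : ℝ => A.indicator g (p + t • w) :=
      (hg.indicator hA).comp (by fun_prop)
    rw [lineMeasure_lineSection hA, ← lintegral_mul_const _ hgA]
    refine lintegral_congr fun t => ?_
    rw [← hinvariant hB t, ← huniv t]
    exact indicator_mul_left _ _ _
  rw [hline]
  have hle {a : ℝ≥0∞} (ha : a ≤ m univ) : (m univ)⁻¹ * a ≤ 1 := by
    rw [mul_comm]
    exact ENNReal.div_le_of_le_mul (by rwa [one_mul])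
  have ha : m (lineSection A p w) ≤ m univ := measure_mono (subset_univ _)
  have hb : m (lineSection B p w) ≤ m univ := measure_mono (subset_univ _)
  refine le_min ?_ ?_
  · exact mul_le_of_le_one_right' (hle hb)
  · calc m (lineSection A p w) * ((m univ)⁻¹ * m (lineSection B p w))
        = (m univ)⁻¹ * m (lineSection A p w) * m (lineSection B p w) := by ring
      _ ≤ m (lineSection B p w) := mul_le_of_le_one_left' (hle ha)

lemma withDensity_pairDensity_prod_le [Nontrivial E] (hg : Measurable g) (hgfin : ∫⁻ x, g x ≠ ⊤)
    {A B : Set E} (hA : MeasurableSet A) (hB : MeasurableSet B) {δ : ℝ≥0∞}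
    (hδ : ∀ w : E, ‖w‖ = 1 → (∃ x ∈ A, ∃ r > (0 : ℝ), x + r • w ∈ B) → lineTransfer g w A B ≤ δ) :
    (((volume.withDensity g).prod (volume.withDensity g)).withDensity (pairDensity g)) (A ×ˢ B) ≤
      (volume : Measure E).toSphere univ * δ := by
  set μ := volume.withDensity g
  have : IsFiniteMeasure μ := isFiniteMeasure_withDensity hgfin
  have hmeas : Measurable fun q : E × Metric.sphere (0 : E) 1 =>
      (lineMeasure g q.1 q.2 univ)⁻¹ *
        lineMeasure g q.1 q.2 (Ioi 0 ∩ lineSection B q.1 (q.2 : E)) := by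
    refine (measurable_lineMeasure hg .univ measurable_fst (by fun_prop)).inv.mul
      (measurable_lineMeasure hg (S := {q : (E × Metric.sphere (0 : E) 1) × ℝ |
        q.2 ∈ Ioi (0 : ℝ) ∧ q.1.1 + q.2 • (q.1.2 : E) ∈ B}) ?_ measurable_fst (by fun_prop))
    exact (measurableSet_Ioi.preimage measurable_snd).inter (hB.preimage (by fun_prop))
  calc ((μ.prod μ).withDensity (pairDensity g)) (A ×ˢ B)
      = ∫⁻ x in A, ∫⁻ y in B, pairDensity g (x, y) ∂μ ∂μ := by
        rw [withDensity_apply _ (hA.prod hB), ← Measure.prod_restrict,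
          lintegral_prod _ (measurable_pairDensity hg).aemeasurable]
    _ = ∫⁻ w : Metric.sphere (0 : E) 1, ∫⁻ x in A, (lineMeasure g x w univ)⁻¹ *
          lineMeasure g x w (Ioi 0 ∩ lineSection B x w) ∂μ ∂volume.toSphere := by
        simp only [μ, setLIntegral_pairDensity hg hB]
        exact lintegral_lintegral_swap hmeas.aemeasurable
    _ ≤ ∫⁻ _ : Metric.sphere (0 : E) 1, δ ∂volume.toSphere := lintegral_mono fun w => ?_
    _ = volume.toSphere univ * δ := by rw [lintegral_const, mul_comm]
  have hw : ‖(w : E)‖ = 1 := norm_eq_of_mem_sphere w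
  by_cases hAB : ∃ x ∈ A, ∃ r > (0 : ℝ), x + r • (w : E) ∈ B
  · refine le_trans (le_trans ?_ (setLIntegral_inv_mul_lineMeasure_le_lineTransfer hw hg hA hB))
      (hδ w hw hAB)
    exact lintegral_mono fun x => by gcongr; exact inter_subset_right
  · push Not at hAB
    refine (setLIntegral_congr_fun (g := 0) hA fun x hx => ?_).trans_le (by simp)
    have hempty : Ioi 0 ∩ lineSection B x (w : E) = ∅ := by
      ext r
      simpa using hAB x hx r
    simp [hempty]

lemma tendsto_measure_mul_measure_zero_of_lineTransfer_le [Nontrivial E] (hg : Measurable g)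
    (hgfin : ∫⁻ x, g x ≠ ⊤) {A B : ℕ → Set E} (hA : ∀ k, MeasurableSet (A k))
    (hB : ∀ k, MeasurableSet (B k)) {δ : ℕ → ℝ≥0∞} (hδ : Tendsto δ atTop (𝓝 0))
    (hAB : ∀ k, ∀ w : E, ‖w‖ = 1 → (∃ x ∈ A k, ∃ r > (0 : ℝ), x + r • w ∈ B k) →
      lineTransfer g w (A k) (B k) ≤ δ k) :
    Tendsto (fun k => volume.withDensity g (A k) * volume.withDensity g (B k)) atTop (𝓝 0) := by
  set μ := volume.withDensity g
  have : IsFiniteMeasure μ := isFiniteMeasure_withDensity hgfin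
  have hac : μ.prod μ ≪ (μ.prod μ).withDensity (pairDensity g) := by
    refine withDensity_absolutelyContinuous' (measurable_pairDensity hg).aemeasurable ?_
    have hμ : μ.prod μ ≪ volume :=
      (withDensity_absolutelyContinuous _ _).prod (withDensity_absolutelyContinuous _ _)
    exact hμ.ae_le (pairDensity_ne_zero_ae hg hgfin)
  have hpairs : Tendsto (fun k => ((μ.prod μ).withDensity (pairDensity g)) (A k ×ˢ B k))
      atTop (𝓝 0) := by
    refine tendsto_of_tendsto_of_tendsto_of_le_of_le tendsto_const_nhds ?_ (fun _ => zero_le)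
      fun k => withDensity_pairDensity_prod_le hg hgfin (hA k) (hB k) (hAB k)
    simpa using ENNReal.Tendsto.const_mul hδ
      (.inr (measure_ne_top (volume : Measure E).toSphere univ))
  simpa only [Measure.prod_prod] using tendsto_measure_zero_of_absolutelyContinuous hac
    (fun k => (hA k).prod (hB k)) hpairs

end Pairs

/-! ### Approximation of half-spaces -/

section Approximation

variable {E : Type*} [NormedAddCommGroup E] [InnerProductSpace ℝ E] {v w : E} {U : Set ℝ}

lemma isUpperSet_lineSection_preimage_inner (hU : IsUpperSet U) (hwv : 0 ≤ ⟪w, v⟫) (x : E) :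
    IsUpperSet (lineSection ((⟪·, v⟫) ⁻¹' U) x w) := by
  intro s t hst hs
  refine hU ?_ hs
  simp only [inner_add_left, real_inner_smul_left]
  gcongr

lemma inner_pos_of_notMem_of_add_smul_mem (hU : IsUpperSet U) {x : E} {r : ℝ} (hr : 0 < r)
    (hx : ⟪x, v⟫ ∉ U) (hxr : ⟪x + r • w, v⟫ ∈ U) : 0 < ⟪w, v⟫ := by
  by_contra! hwv
  refine hx (hU ?_ hxr)
  rw [inner_add_left, real_inner_smul_left]
  linarith [mul_nonpos_of_nonneg_of_nonpos hr.le hwv]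

variable [FiniteDimensional ℝ E] [MeasurableSpace E] [BorelSpace E] {g : E → ℝ≥0∞}

lemma exists_seq_tendsto_withDensity_sdiff_zero [Nontrivial E] (hg : Measurable g)
    (hgfin : ∫⁻ x, g x ≠ ⊤) (hU : IsUpperSet U) {𝒞 : Set (Set E)} (hne : 𝒞.Nonempty)
    (hmeas : ∀ F ∈ 𝒞, MeasurableSet F)
    (hmass : ∀ F ∈ 𝒞, volume.withDensity g F = volume.withDensity g ((⟪·, v⟫) ⁻¹' U))
    (hsymm : ∀ F ∈ 𝒞, ∀ w : E, ‖w‖ = 1 → 0 < ⟪w, v⟫ → lineSymm g w F ∈ 𝒞) :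
    ∃ F : ℕ → Set E, (∀ k, F k ∈ 𝒞) ∧
      Tendsto (fun k => volume.withDensity g (F k \ (⟪·, v⟫) ⁻¹' U)) atTop (𝓝 0) := by
  set μ := volume.withDensity g
  set H : Set E := (⟪·, v⟫) ⁻¹' U
  have : IsFiniteMeasure μ := isFiniteMeasure_withDensity hgfin
  have hH : MeasurableSet H := hU.ordConnected.measurableSet.preimage (by fun_prop)
  set d := sInf ((fun F => μ (F \ H)) '' 𝒞)
  have hd {F : Set E} (hF : F ∈ 𝒞) : d ≤ μ (F \ H) := sInf_le (mem_image_of_mem _ hF)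
  have hdtop : d ≠ ⊤ := ((hd hne.some_mem).trans_lt (measure_lt_top μ _)).ne
  obtain ⟨u, -, (hud : Tendsto u atTop (𝓝 d)), hu⟩ :=
    exists_seq_tendsto_sInf (hne.image fun F => μ (F \ H)) (OrderBot.bddBelow _)
  choose F hF hFu using hu
  obtain rfl : (fun k => μ (F k \ H)) = u := funext hFu
  have hgap : Tendsto (fun k => μ (F k \ H) - d) atTop (𝓝 0) := by
    simpa using ENNReal.Tendsto.sub hud (tendsto_const_nhds (x := d)) (.inl hdtop)
  have htransfer (k : ℕ) (w : E) (hw : ‖w‖ = 1)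
      (hpair : ∃ x ∈ F k \ H, ∃ r > (0 : ℝ), x + r • w ∈ H \ F k) :
      lineTransfer g w (F k \ H) (H \ F k) ≤ μ (F k \ H) - d := by
    obtain ⟨x, hx, r, hr, hxr⟩ := hpair
    have hwv : 0 < ⟪w, v⟫ := inner_pos_of_notMem_of_add_smul_mem hU hr hx.2 hxr.1
    refine ENNReal.le_sub_of_add_le_left hdtop ?_
    refine (add_le_add_left (hd (hsymm _ (hF k) w hw hwv)) _).trans ?_
    exact withDensity_lineSymm_sdiff_add_lineTransfer_le hw hg hgfin (hmeas _ (hF k)) hH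
      (isUpperSet_lineSection_preimage_inner hU hwv.le)
  have hprod : Tendsto (fun k => μ (F k \ H) * μ (H \ F k)) atTop (𝓝 0) :=
    tendsto_measure_mul_measure_zero_of_lineTransfer_le hg hgfin
      (fun k => (hmeas _ (hF k)).diff hH) (fun k => hH.diff (hmeas _ (hF k))) hgap htransfer
  have hsq : Tendsto (fun k => μ (F k \ H) * μ (H \ F k)) atTop (𝓝 (d * d)) := by
    simp only [← measure_sdiff_comm (hmeas _ (hF _)) hH (hmass _ (hF _))]
    exact ENNReal.Tendsto.mul hud (.inr hdtop) hud (.inr hdtop)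
  have hdzero : d = 0 := mul_self_eq_zero.mp (tendsto_nhds_unique hsq hprod)
  exact ⟨F, hF, hdzero ▸ hud⟩

end Approximation

/-! ### Weak directional derivatives -/

section WeakDirDeriv

variable {E : Type*} [NormedAddCommGroup E] [NormedSpace ℝ E] {f D χ ψ : E → ℝ} {e : E}

lemma continuous_fderiv_apply_const (hψ : ContDiff ℝ 1 ψ) (e : E) :
    Continuous fun x => fderiv ℝ ψ x e :=
  (hψ.continuous_fderiv one_ne_zero).clm_apply continuous_const

variable [MeasurableSpace E] [BorelSpace E] {μ : Measure E}

/-- `D` is the weak derivative of `f` in direction `e` with respect to `μ`, and both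
are locally integrable. -/
def HasWeakDirDeriv (f D : E → ℝ) (e : E) (μ : Measure E) : Prop :=
  LocallyIntegrable f μ ∧ LocallyIntegrable D μ ∧
    ∀ ψ : E → ℝ, ContDiff ℝ 1 ψ → HasCompactSupport ψ →
      ∫ x, f x * fderiv ℝ ψ x e ∂μ = -∫ x, ψ x * D x ∂μ

variable [FiniteDimensional ℝ E]

lemma HasWeakDirDeriv.contDiff_mul (h : HasWeakDirDeriv f D e μ) (hχ : ContDiff ℝ 1 χ) :
    HasWeakDirDeriv (fun x => χ x * f x) (fun x => χ x * D x + fderiv ℝ χ x e * f x) e μ := by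
  obtain ⟨hf, hD, hfD⟩ := h
  have hχe : Continuous fun x => fderiv ℝ χ x e := continuous_fderiv_apply_const hχ e
  have hχf : LocallyIntegrable (fun x => χ x * f x) μ := hf.continuous_mul hχ.continuous
  have hχD : LocallyIntegrable (fun x => χ x * D x) μ := hD.continuous_mul hχ.continuous
  have hχ'f : LocallyIntegrable (fun x => fderiv ℝ χ x e * f x) μ := hf.continuous_mul hχe
  refine ⟨hχf, hχD.add hχ'f, fun ψ hψ hψc => ?_⟩
  have hint1 : Integrable (fun x => fderiv ℝ ψ x e * (χ x * f x)) μ :=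
    hχf.integrable_smul_left_of_hasCompactSupport (continuous_fderiv_apply_const hψ e)
      (hψc.fderiv_apply ℝ e)
  have hint2 : Integrable (fun x => ψ x * (fderiv ℝ χ x e * f x)) μ :=
    hχ'f.integrable_smul_left_of_hasCompactSupport hψ.continuous hψc
  have hint3 : Integrable (fun x => ψ x * (χ x * D x)) μ :=
    hχD.integrable_smul_left_of_hasCompactSupport hψ.continuous hψc
  have hprod (x : E) : f x * fderiv ℝ (fun x => χ x * ψ x) x e =
      fderiv ℝ ψ x e * (χ x * f x) + ψ x * (fderiv ℝ χ x e * f x) := by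
    rw [fderiv_fun_mul (hχ.differentiable one_ne_zero x) (hψ.differentiable one_ne_zero x)]
    simp only [add_apply, smul_apply, smul_eq_mul]
    ring
  have hparts := hfD (fun x => χ x * ψ x) (hχ.mul hψ) hψc.mul_left
  simp only [hprod, integral_add hint1 hint2, mul_assoc, mul_left_comm (χ _) (ψ _)] at hparts
  simp only [mul_add, integral_add hint3 hint2, mul_comm (χ _ * f _)]
  linarith

lemma HasWeakDirDeriv.hasDerivAt_integral_translate (h : HasWeakDirDeriv f D e μ)
    (hf : Integrable f μ) (hψ : ContDiff ℝ 1 ψ) (hψc : HasCompactSupport ψ) (s : ℝ) :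
    HasDerivAt (fun s : ℝ => ∫ x, ψ (x - s • e) * f x ∂μ) (∫ x, ψ (x - s • e) * D x ∂μ) s := by
  have hψe : Continuous fun x => fderiv ℝ ψ x e := continuous_fderiv_apply_const hψ e
  obtain ⟨M, hM⟩ := (hψc.fderiv_apply ℝ e).exists_bound_of_continuous hψe
  obtain ⟨C, hC⟩ := hψc.exists_bound_of_continuous hψ.continuous
  have hderiv (x : E) (t : ℝ) :
      HasDerivAt (fun t : ℝ => ψ (x - t • e) * f x) (-fderiv ℝ ψ (x - t • e) e * f x) t := by
    have hshift : HasDerivAt (fun t : ℝ => x - t • e) (-e) t := by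
      simpa using ((hasDerivAt_id t).smul_const e).const_sub x
    have hfderiv := (hψ.differentiable one_ne_zero (x - t • e)).hasFDerivAt
    simpa using (hfderiv.comp_hasDerivAt t hshift).mul_const (f x)
  have hparts : ∫ x, -fderiv ℝ ψ (x - s • e) e * f x ∂μ = ∫ x, ψ (x - s • e) * D x ∂μ := by
    have hψs := h.2.2 (fun x => ψ (x - s • e)) (by fun_prop)
      (hψc.comp_homeomorph (Homeomorph.subRight (s • e)))
    simp only [fderiv_comp_sub, mul_comm (f _)] at hψs
    simp only [neg_mul, integral_neg, hψs, neg_neg]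
  rw [← hparts]
  refine (hasDerivAt_integral_of_dominated_loc_of_deriv_le (bound := fun x => M * ‖f x‖)
    univ_mem (Eventually.of_forall fun t => ?_) ?_ ?_ ?_ (hf.norm.const_mul M)
    (Eventually.of_forall fun x t _ => hderiv x t)).2
  · exact (by fun_prop : Continuous fun x => ψ (x - t • e)).aestronglyMeasurable.mul hf.1
  · exact hf.bdd_mul (by fun_prop) (Eventually.of_forall fun x => hC _)
  · exact (by fun_prop : Continuous fun x => -fderiv ℝ ψ (x - s • e) e).aestronglyMeasurable.mul
      hf.1
  · refine Eventually.of_forall fun x t _ => ?_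
    rw [norm_mul, norm_neg]
    gcongr
    exact hM _

variable [μ.IsAddHaarMeasure]

lemma integrable_prod_comp_add_smul (hD : Integrable D μ) (e : E) (κ : Measure ℝ)
    [IsFiniteMeasure κ] : Integrable (fun q : E × ℝ => D (q.1 + q.2 • e)) (μ.prod κ) := by
  have hshear : MeasurePreserving (fun q : ℝ × E => (q.1, q.2 + q.1 • e)) (κ.prod μ) (κ.prod μ) :=
    (MeasurePreserving.id κ).skew_product (g := fun s x => x + s • e)
      (by unfold Function.uncurry; fun_prop)
      (Eventually.of_forall fun s => map_add_right_eq_self μ (s • e))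
  exact (hshear.integrable_comp_of_integrable (hD.comp_snd κ)).swap

lemma HasWeakDirDeriv.ae_sub_eq_intervalIntegral (h : HasWeakDirDeriv f D e μ)
    (hf : Integrable f μ) (hD : Integrable D μ) {r : ℝ} (hr : 0 ≤ r) :
    ∀ᵐ x ∂μ, f (x + r • e) - f x = ∫ s in 0..r, D (x + s • e) := by
  simp only [intervalIntegral.integral_of_le hr]
  have hshear := integrable_prod_comp_add_smul hD e (volume.restrict (Ioc 0 r))
  refine ae_eq_of_integral_contDiff_smul_eq ((hf.comp_add_right _).sub hf).locallyIntegrable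
    hshear.integral_prod_left.locallyIntegrable fun ψ hψ hψc => ?_
  have hψ1 : ContDiff ℝ 1 ψ := hψ.of_le (by exact_mod_cast le_top)
  obtain ⟨C, hC⟩ := hψc.exists_bound_of_continuous hψ.continuous
  have hint {F : E → ℝ} (hF : Integrable F μ) : Integrable (fun x => ψ x * F x) μ :=
    hF.bdd_mul hψ.continuous.aestronglyMeasurable (Eventually.of_forall hC)
  have htranslate (s : ℝ) (F : E → ℝ) :
      ∫ x, ψ (x - s • e) * F x ∂μ = ∫ x, ψ x * F (x + s • e) ∂μ := by
    rw [← integral_add_right_eq_self (fun x => ψ (x - s • e) * F x) (s • e)]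
    simp only [add_sub_cancel_right]
  have hcont : Continuous fun s : ℝ => ∫ x, ψ (x - s • e) * D x ∂μ :=
    continuous_of_dominated (bound := fun x => C * ‖D x‖)
      (fun s => (by fun_prop : Continuous fun x => ψ (x - s • e)).aestronglyMeasurable.mul hD.1)
      (fun s => Eventually.of_forall fun x => by rw [norm_mul]; gcongr; exact hC _)
      (hD.norm.const_mul C) (Eventually.of_forall fun x => by fun_prop)
  calc ∫ x, ψ x • (f (x + r • e) - f x) ∂μ
      = ∫ x, ψ (x - r • e) * f x ∂μ - ∫ x, ψ (x - (0 : ℝ) • e) * f x ∂μ := by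
        simp only [zero_smul, sub_zero, htranslate, smul_eq_mul, mul_sub]
        exact integral_sub (hint (hf.comp_add_right _)) (hint hf)
    _ = ∫ s in 0..r, ∫ x, ψ (x - s • e) * D x ∂μ :=
        (intervalIntegral.integral_eq_sub_of_hasDerivAt
          (fun s _ => h.hasDerivAt_integral_translate hf hψ1 hψc s)
          (hcont.intervalIntegrable _ _)).symm
    _ = ∫ s in Ioc 0 r, ∫ x, ψ x * D (x + s • e) ∂μ := by
        simp only [intervalIntegral.integral_of_le hr, htranslate]
    _ = ∫ x, (∫ s in Ioc 0 r, ψ x * D (x + s • e)) ∂μ :=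
        (integral_integral_swap (hshear.bdd_mul (by fun_prop)
          (Eventually.of_forall fun q : E × ℝ => hC q.1))).symm
    _ = ∫ x, ψ x • (∫ s in Ioc 0 r, D (x + s • e)) ∂μ := by
        simp only [integral_const_mul, smul_eq_mul]

lemma continuous_setIntegral_add_smul (hD : Integrable D μ) (e : E) (K : Set E) :
    Continuous fun s : ℝ => ∫ x in K, D (x + s • e) ∂μ := by
  have : Fact ((1 : ℝ≥0∞) ≠ ⊤) := ⟨ENNReal.one_ne_top⟩
  have hmem : MemLp D 1 μ := memLp_one_iff_integrable.mpr hD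
  have hLp : Continuous fun s : ℝ => (DomAddAct.mk (s • e) +ᵥ hmem.toLp D : Lp ℝ 1 μ) :=
    (DomAddAct.continuous_mk.comp (by fun_prop : Continuous fun s : ℝ => s • e)).vadd
      continuous_const
  refine ((continuous_setIntegral K).comp hLp).congr fun s =>
    integral_congr_ae (ae_restrict_of_ae ?_)
  change ∀ᵐ x ∂μ, (DomAddAct.mk (s • e) +ᵥ hmem.toLp D : Lp ℝ 1 μ) x = D (x + s • e)
  rw [DomAddAct.mk_vadd_toLp]
  filter_upwards [MemLp.coeFn_toLp (hmem.comp_measurePreserving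
    (measurePreserving_vadd (s • e) μ))] with x hx
  simpa [Function.comp_def, add_comm] using hx

lemma nonneg_of_forall_intervalIntegral_nonneg {φ : ℝ → ℝ} {a : ℝ} (hφ : Continuous φ)
    (h : ∀ r > 0, 0 ≤ ∫ s in a..a + r, φ s) : 0 ≤ φ a := by
  have hderiv := intervalIntegral.integral_hasDerivAt_right (hφ.intervalIntegrable a a)
    (hφ.stronglyMeasurableAtFilter _ _) hφ.continuousAt
  refine ge_of_tendsto hderiv.tendsto_slope_zero_right ?_
  filter_upwards [self_mem_nhdsWithin] with r (hr : 0 < r)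
  rw [intervalIntegral.integral_same, sub_zero, smul_eq_mul]
  exact mul_nonneg (inv_nonneg.mpr hr.le) (h r hr)

lemma HasWeakDirDeriv.ae_nonneg_of_eq_zero_of_integrable (h : HasWeakDirDeriv f D e μ)
    (hf : Integrable f μ) (hD : Integrable D μ) (hf0 : ∀ x, 0 ≤ f x) :
    ∀ᵐ x ∂μ, f x = 0 → 0 ≤ D x := by
  have hZ : NullMeasurableSet {x | f x = 0} μ :=
    nullMeasurableSet_eq_fun hf.aemeasurable aemeasurable_const
  refine (ae_restrict_iff'₀ hZ).mp ?_
  refine ae_nonneg_restrict_of_forall_setIntegral_nonneg_inter hD.integrableOn fun s hs _ => ?_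
  have hK : NullMeasurableSet (s ∩ {x | f x = 0}) μ := hs.nullMeasurableSet.inter hZ
  set K := s ∩ {x | f x = 0}
  suffices 0 ≤ ∫ x in K, D (x + (0 : ℝ) • e) ∂μ by simpa only [zero_smul, add_zero] using this
  refine nonneg_of_forall_intervalIntegral_nonneg
    (continuous_setIntegral_add_smul hD e K) fun r hr => ?_
  rw [zero_add, intervalIntegral.integral_of_le hr.le, integral_integral_swap]
  · refine integral_nonneg_of_ae ?_
    filter_upwards [ae_restrict_of_ae (h.ae_sub_eq_intervalIntegral hf hD hr.le),
      ae_restrict_mem₀ hK] with x hx hxK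
    rw [intervalIntegral.integral_of_le hr.le, hxK.2, sub_zero] at hx
    exact (hf0 _).trans_eq hx
  · exact ((integrable_prod_comp_add_smul hD e (volume.restrict (Ioc 0 r))).mono_measure
      (Measure.prod_mono Measure.restrict_le_self le_rfl)).swap

lemma HasWeakDirDeriv.ae_nonneg_of_eq_zero (h : HasWeakDirDeriv f D e μ) (hf0 : ∀ x, 0 ≤ f x) :
    ∀ᵐ x ∂μ, f x = 0 → 0 ≤ D x := by
  have hlocal (N : ℕ) : ∀ᵐ x ∂μ, ‖x‖ ≤ N + 1 → f x = 0 → 0 ≤ D x := by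
    let χ : ContDiffBump (0 : E) := ⟨N + 1, N + 2, by positivity, by linarith⟩
    have hχ : ContDiff ℝ 1 χ := χ.contDiff
    have hχc : HasCompactSupport χ := χ.hasCompactSupport
    have hχf : Integrable (fun x => χ x * f x) μ :=
      h.1.integrable_smul_left_of_hasCompactSupport hχ.continuous hχc
    have hχD : Integrable (fun x => χ x * D x) μ :=
      h.2.1.integrable_smul_left_of_hasCompactSupport hχ.continuous hχc
    have hχ'f : Integrable (fun x => fderiv ℝ χ x e * f x) μ :=
      h.1.integrable_smul_left_of_hasCompactSupport (continuous_fderiv_apply_const hχ e)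
        (hχc.fderiv_apply ℝ e)
    filter_upwards [(h.contDiff_mul hχ).ae_nonneg_of_eq_zero_of_integrable hχf (hχD.add hχ'f)
      fun x => mul_nonneg χ.nonneg (hf0 x)] with x hx hxN hfx
    have hχx : χ x = 1 := χ.one_of_mem_closedBall (by rwa [mem_closedBall_zero_iff])
    simpa [hχx, hfx] using hx
  filter_upwards [ae_all_iff.mpr hlocal] with x hx
  obtain ⟨N, hN⟩ := exists_nat_ge ‖x‖
  exact hx N (by linarith)

end WeakDirDeriv

lemma dvg_smul_const {n : ℕ} {ψ : En n → ℝ} {x : En n} (hψ : DifferentiableAt ℝ ψ x) (e : En n) :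
    dvg (fun x => ψ x • e) x = fderiv ℝ ψ x e := by
  have he : e = ∑ i, e i • EuclideanSpace.single i (1 : ℝ) := by
    ext k; simp [Pi.single_apply]
  conv_rhs => rw [he, map_sum]
  simp [dvg, fderiv_smul_const hψ, mul_comm]

lemma HasWeakGrad.hasWeakDirDeriv {n : ℕ} {f : En n → ℝ} {f' : En n → En n}
    (h : HasWeakGrad f f') (e : En n) :
    HasWeakDirDeriv f (fun x => ⟪e, f' x⟫) e volume := by
  obtain ⟨hf, hf', hdiv⟩ := h
  refine ⟨hf, fun x => (hf' x).imp fun s hs => ⟨hs.1, hs.2.const_inner e⟩, fun ψ hψ hψc => ?_⟩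
  simpa only [dvg_smul_const (hψ.differentiable one_ne_zero _), real_inner_smul_left] using
    hdiv (fun x => ψ x • e) (hψ.smul contDiff_const) hψc.smul_right

lemma HasWeakGrad.ae_eq_zero_of_eq_zero {n : ℕ} {f : En n → ℝ} {f' : En n → En n}
    (h : HasWeakGrad f f') (hf0 : ∀ x, 0 ≤ f x) : ∀ᵐ x, f x = 0 → f' x = 0 := by
  have hnonneg (e : En n) : ∀ᵐ x, f x = 0 → 0 ≤ ⟪e, f' x⟫ :=
    (h.hasWeakDirDeriv e).ae_nonneg_of_eq_zero hf0
  filter_upwards [ae_all_iff.mpr fun i : Fin n => hnonneg (EuclideanSpace.single i 1),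
    ae_all_iff.mpr fun i : Fin n => hnonneg (-EuclideanSpace.single i 1)] with x hpos hneg hfx
  ext i
  have hi := hpos i hfx
  have hi' := hneg i hfx
  simp only [inner_neg_left, EuclideanSpace.inner_single_left, map_one, one_mul] at hi hi'
  exact le_antisymm (neg_nonneg.mp hi') hi

/-! ### Lower semicontinuity of the perimeter -/

section LowerSemicontinuity

open scoped symmDiff

lemma tendsto_setIntegral_of_tendsto_measure_symmDiff {α G : Type*} [MeasurableSpace α]
    [NormedAddCommGroup G] [NormedSpace ℝ G] {μ ν : Measure α} {σ : α → G} (hσ : Integrable σ μ)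
    (hσν : μ.withDensity (‖σ ·‖ₑ) ≪ ν) {F : ℕ → Set α} {H : Set α}
    (hF : ∀ k, MeasurableSet (F k)) (hH : MeasurableSet H)
    (hFH : Tendsto (fun k => ν (F k ∆ H)) atTop (𝓝 0)) :
    Tendsto (fun k => ∫ x in F k, σ x ∂μ) atTop (𝓝 (∫ x in H, σ x ∂μ)) := by
  have : IsFiniteMeasure (μ.withDensity (‖σ ·‖ₑ)) := isFiniteMeasure_withDensity hσ.2.ne
  simp_rw [← integral_indicator (hF _), ← integral_indicator hH]
  refine tendsto_integral_of_L1 _ (hσ.indicator hH).1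
    (Eventually.of_forall fun k => hσ.indicator (hF k)) ?_
  refine (tendsto_measure_zero_of_absolutelyContinuous hσν
    (fun k => (hF k).symmDiff hH) hFH).congr fun k => ?_
  rw [withDensity_apply _ ((hF k).symmDiff hH), ← lintegral_indicator ((hF k).symmDiff hH)]
  refine lintegral_congr fun x => ?_
  rw [← apply_indicator_symmDiff (g := enorm) enorm_neg, enorm_indicator_eq_indicator_enorm]

variable {n : ℕ} {f : En n → ℝ} {f' φ : En n → En n}

/-- The divergence of `f φ`, expanded by the product rule: the integrand in the weighted
variation. -/
def weightedDvg (f : En n → ℝ) (f' φ : En n → En n) (x : En n) : ℝ :=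
  f x * dvg φ x + ⟪φ x, f' x⟫

lemma continuous_dvg (hφ : ContDiff ℝ 1 φ) : Continuous (dvg φ) := by
  have := hφ.continuous_fderiv one_ne_zero
  unfold dvg
  fun_prop

lemma hasCompactSupport_dvg (hφ : HasCompactSupport φ) : HasCompactSupport (dvg φ) :=
  (hφ.fderiv ℝ).comp_left (g := fun L : En n →L[ℝ] En n =>
    ∑ i, L (EuclideanSpace.single i 1) i) (by simp)

lemma integrable_weightedDvg (hf : LocallyIntegrable f) (hf' : LocallyIntegrable f')
    (hφ : ContDiff ℝ 1 φ) (hφc : HasCompactSupport φ) : Integrable (weightedDvg f f' φ) := by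
  have hdvg : Integrable fun x => f x * dvg φ x :=
    hf.integrable_smul_right_of_hasCompactSupport (continuous_dvg hφ) (hasCompactSupport_dvg hφc)
  have hnorm : Integrable fun x => ‖φ x‖ • f' x :=
    hf'.integrable_smul_left_of_hasCompactSupport hφ.continuous.norm hφc.norm
  refine hdvg.add (hnorm.mono
    (hφ.continuous.aestronglyMeasurable.inner hf'.aestronglyMeasurable) ?_)
  refine Eventually.of_forall fun x => (norm_inner_le_norm _ _).trans_eq ?_
  rw [norm_smul, norm_norm]

lemma HasWeakGrad.withDensity_weightedDvg_absolutelyContinuous (h : HasWeakGrad f f')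
    (hf0 : ∀ x, 0 ≤ f x) (hφ : ContDiff ℝ 1 φ) (hφc : HasCompactSupport φ) :
    volume.withDensity (‖weightedDvg f f' φ ·‖ₑ) ≪ muM f := by
  intro s hs
  rw [muM, withDensity_apply_eq_zero' h.1.aestronglyMeasurable.aemeasurable.ennreal_ofReal] at hs
  rw [withDensity_apply_eq_zero' (integrable_weightedDvg h.1 h.2.1 hφ hφc).1.enorm]
  refine measure_mono_null_ae ?_ hs
  filter_upwards [h.ae_eq_zero_of_eq_zero hf0] with x hx hxs
  refine ⟨fun hfx => hxs.1 ?_, hxs.2⟩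
  have hfx0 : f x = 0 := (ENNReal.ofReal_eq_zero.mp hfx).antisymm (hf0 x)
  simp [weightedDvg, hfx0, hx hfx0]

lemma perim_univ_eq_iSup (f : En n → ℝ) (f' : En n → En n) {F : Set (En n)}
    (hF : MeasurableSet F) : perim f f' univ F =
      ⨆ (φ : En n → En n) (_ : IsTestField univ φ),
        ENNReal.ofReal (∫ x in F, weightedDvg f f' φ x) := by
  simp only [perim, bvVar, setIntegral_univ, ← integral_indicator hF]
  refine iSup_congr fun φ => iSup_congr fun _ => ?_
  congr 2 with x
  by_cases hx : x ∈ F <;> simp [hx, weightedDvg]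

lemma perim_congr (f : En n → ℝ) (f' : En n → En n) {A B : Set (En n)}
    (h : A =ᵐ[volume] B) : perim f f' univ A = perim f f' univ B := by
  refine iSup_congr fun φ => iSup_congr fun _ => congrArg ENNReal.ofReal ?_
  refine integral_congr_ae (ae_restrict_of_ae ?_)
  filter_upwards [indicator_ae_eq_of_ae_eq_set (f := fun _ => (1 : ℝ)) h] with x hx
  rw [hx]

lemma perim_le_of_tendsto (hW : MemW f f') {F : ℕ → Set (En n)} {H : Set (En n)}
    (hF : ∀ k, MeasurableSet (F k)) (hH : MeasurableSet H)
    (hFH : Tendsto (fun k => muM f (F k ∆ H)) atTop (𝓝 0)) {c : ℝ≥0∞}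
    (hc : ∀ k, perim f f' univ (F k) ≤ c) : perim f f' univ H ≤ c := by
  obtain ⟨hf0, -, hgrad⟩ := hW
  rw [perim_univ_eq_iSup f f' hH]
  refine iSup₂_le fun φ hφ => ?_
  have hlim := tendsto_setIntegral_of_tendsto_measure_symmDiff
    (integrable_weightedDvg hgrad.1 hgrad.2.1 hφ.1 hφ.2.1)
    (hgrad.withDensity_weightedDvg_absolutelyContinuous hf0 hφ.1 hφ.2.1) hF hH hFH
  refine le_of_tendsto (ENNReal.tendsto_ofReal hlim) (Eventually.of_forall fun k => ?_)
  refine le_trans ?_ (hc k)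
  rw [perim_univ_eq_iSup f f' (hF k)]
  exact le_iSup₂_of_le φ hφ le_rfl

end LowerSemicontinuity

/-! ### Half-spaces -/

section HalfSpace

lemma volume_preimage_inner_singleton {E : Type*} [NormedAddCommGroup E] [InnerProductSpace ℝ E]
    [FiniteDimensional ℝ E] [MeasurableSpace E] [BorelSpace E] {v : E} (hv : ‖v‖ = 1) (c : ℝ) :
    volume ((⟪·, v⟫) ⁻¹' {c}) = 0 := by
  have hmeas : MeasurableSet ((⟪·, v⟫) ⁻¹' {c} : Set E) :=
    (by fun_prop : Measurable fun x : E => ⟪x, v⟫) (measurableSet_singleton c)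
  have hsection (p : (ℝ ∙ v)ᗮ) : lineSection ((⟪·, v⟫) ⁻¹' {c}) (p : E) v = {c} := by
    ext t
    simp [inner_add_smul_of_mem_orthogonal hv]
  rw [← withDensity_one (μ := (volume : Measure E)),
    withDensity_eq_lintegral_lineMeasure hv measurable_one hmeas]
  simp [hsection]

variable {n : ℕ} {f : En n → ℝ} {v : En n}

lemma nullSingletonClass_map_inner (hv : ‖v‖ = 1) :
    NullSingletonClass ((muM f).map (⟪·, v⟫)) where
  measure_singleton c := by
    rw [Measure.map_apply (by fun_prop) (measurableSet_singleton c)]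
    exact withDensity_absolutelyContinuous _ _ (volume_preimage_inner_singleton hv c)

lemma isFiniteMeasure_muM (hf : Integrable f) : IsFiniteMeasure (muM f) :=
  isFiniteMeasure_withDensity hf.lintegral_lt_top.ne

lemma halfSpaceOf_eq_preimage_inner (hf : Integrable f) (hv : ‖v‖ = 1) (E : Set (En n)) :
    halfSpaceOf f E v = (⟪·, v⟫) ⁻¹' {c | (muM f).map (⟪·, v⟫) (Ici c) ≤ muM f E} := by
  have := isFiniteMeasure_muM hf
  have := nullSingletonClass_map_inner (f := f) hv
  rw [← setOf_forall_le_eq_setOf_measure_Ici_le]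
  simp only [Measure.map_apply (by fun_prop : Measurable fun x : En n => ⟪x, v⟫) measurableSet_Ici]
  rfl

lemma measurableSet_halfSpaceOf (hf : Integrable f) (hv : ‖v‖ = 1) (E : Set (En n)) :
    MeasurableSet (halfSpaceOf f E v) := by
  rw [halfSpaceOf_eq_preimage_inner hf hv]
  exact (isUpperSet_setOf_measure_Ici_le _).ordConnected.measurableSet.preimage (by fun_prop)

lemma muM_halfSpaceOf (hf : Integrable f) (hv : ‖v‖ = 1) (E : Set (En n)) :
    muM f (halfSpaceOf f E v) = muM f E := by
  have := isFiniteMeasure_muM hf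
  have := nullSingletonClass_map_inner (f := f) hv
  have hinner : Measurable fun x : En n => ⟪x, v⟫ := by fun_prop
  rw [halfSpaceOf_eq_preimage_inner hf hv, ← Measure.map_apply hinner
    (isUpperSet_setOf_measure_Ici_le _).ordConnected.measurableSet]
  refine measure_setOf_measure_Ici_le ?_
  rw [Measure.map_apply hinner MeasurableSet.univ]
  exact measure_mono (subset_univ E)

end HalfSpace

/-! ### Competitors -/

section Competitors

variable {n : ℕ} {f : En n → ℝ} {f' : En n → En n} {E : Set (En n)}

/-- The measurable sets with the `μ`-mass of `E` and at most its weighted perimeter, among which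
the half-space is approached by repeated symmetrization. -/
def competitors (f : En n → ℝ) (f' : En n → En n) (E : Set (En n)) : Set (Set (En n)) :=
  {F | MeasurableSet F ∧ muM f F = muM f E ∧ perim f f' univ F ≤ perim f f' univ E}

lemma competitors_nonempty (hE : NullMeasurableSet E) : (competitors f f' E).Nonempty := by
  obtain ⟨E₀, hE₀, hEE₀⟩ := hE
  exact ⟨E₀, hE₀, measure_congr ((withDensity_absolutelyContinuous _ _).ae_eq hEE₀.symm),
    (perim_congr f f' hEE₀).ge⟩

lemma IsPSMeasure.perim_ehrhardSymm_le (hPS : IsPSMeasure f f') {w : En n} (hw : ‖w‖ = 1)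
    (hE : NullMeasurableSet E) : perim f f' univ (ehrhardSymm f w E) ≤ perim f f' univ E := by
  by_cases htop : perim f f' univ E = ⊤
  · exact le_top.trans_eq htop.symm
  · exact hPS w hw E hE (lt_top_iff_ne_top.mpr htop)

lemma IsPSMeasure.lineSymm_mem_competitors (hPS : IsPSMeasure f f') {g : En n → ℝ≥0∞}
    (hg : Measurable g) (hgfin : ∫⁻ x, g x ≠ ⊤)
    (hfg : (fun x => ENNReal.ofReal (f x)) =ᵐ[volume] g) {w : En n} (hw : ‖w‖ = 1)
    {F : Set (En n)} (hF : F ∈ competitors f f' E) : lineSymm g w F ∈ competitors f f' E := by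
  obtain ⟨hFmeas, hFmass, hFperim⟩ := hF
  refine ⟨measurableSet_lineSymm hg hFmeas, ?_, ?_⟩
  · rw [← hFmass, muM, withDensity_congr_ae hfg, withDensity_lineSymm hw hg hgfin hFmeas]
  · rw [← perim_congr f f' (ehrhardSymm_ae_eq_lineSymm hw hg hgfin hfg F)]
    exact (hPS.perim_ehrhardSymm_le hw hFmeas.nullMeasurableSet).trans hFperim

end Competitors

/-- **Half-spaces are isoperimetric sets.** If `n ≥ 2` and `μ = f·Lⁿ ∈ 𝒲(ℝⁿ)` is a
PS measure, then for every direction `v` and measurable set `E`,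
`Per_μ(H_μ(E, v)) ≤ Per_μ(E)`. -/
theorem halfspaces_minimal {n : ℕ} (hn : 2 ≤ n) (f : En n → ℝ) (f' : En n → En n)
    (hW : MemW f f') (hPS : IsPSMeasure f f')
    (v : En n) (hv : ‖v‖ = 1) (E : Set (En n)) (hE : NullMeasurableSet E volume) :
    perim f f' univ (halfSpaceOf f E v) ≤ perim f f' univ E := by
  have hf : Integrable f := hW.2.1
  obtain ⟨g, hg, hfg⟩ := hf.1.aemeasurable.ennreal_ofReal
  have hμ : muM f = volume.withDensity g := withDensity_congr_ae hfg
  have hgfin : ∫⁻ x, g x ≠ ⊤ := lintegral_congr_ae hfg ▸ hf.lintegral_lt_top.ne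
  have : IsFiniteMeasure (muM f) := isFiniteMeasure_muM hf
  have : Nontrivial (En n) := nontrivial_of_ne v 0 (norm_ne_zero_iff.mp (by simp [hv]))
  have hH := measurableSet_halfSpaceOf hf hv E
  have hHmass := muM_halfSpaceOf hf hv E
  obtain ⟨F, hF, hlim⟩ : ∃ F : ℕ → Set (En n), (∀ k, F k ∈ competitors f f' E) ∧
      Tendsto (fun k => muM f (F k \ halfSpaceOf f E v)) atTop (𝓝 0) := by
    rw [halfSpaceOf_eq_preimage_inner hf hv, hμ] at hHmass ⊢
    refine exists_seq_tendsto_withDensity_sdiff_zero hg hgfin (isUpperSet_setOf_measure_Ici_le _)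
      (competitors_nonempty hE) (fun F hF => hF.1) (fun F hF => ?_)
      fun F hF w hw _ => hPS.lineSymm_mem_competitors hg hgfin hfg hw hF
    rw [hHmass, ← hμ, hF.2.1]
  refine perim_le_of_tendsto hW (fun k => (hF k).1) hH ?_ fun k => (hF k).2.2
  have hsdiff (k : ℕ) := measure_sdiff_comm (hF k).1 hH ((hF k).2.1.trans hHmass.symm)
  simp_rw [measure_symmDiff_eq (hF _).1.nullMeasurableSet hH.nullMeasurableSet, ← hsdiff]
  simpa using hlim.add hlim

end
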